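/- Let L = p_1^{r_1} p_2^{r_2} ⋯ p_m^{r_m} be an odd integer greater than 1, where p_1 < p_2 < ⋯ < p_m are primes and each r_i ≥ 1. Suppose one of the following holds: (a) p_1 > 3, and there is an index t with r_t = 1 and c_{p_t} = (p_t − 1)/2 such that p_t does not satisfy condition (T3) while every p_i with i ≠ t satisfies condition (T3); (b) p_1 = 3, r_1 = 1, and there is an index t ≥ 2 with r_t = 1 and c_{p_t} = e_{p_t} = (p_t − 1)/2 such that p_t does not satisfy condition (T3) while every p_i with i ≥ 2 and i ≠ t satisfies condition (T3); or (c) p_1 = 3, r_1 = 2, and every p_i with i ≥ 2 satisfies condition (T3). Then there exists a CAC C of length L and weight 3, all of whose codewords are equi-difference, whose leave Λ = Z_L \ ⋃_{I ∈ C} d(I) satisfies |Λ| = 2 and, if 3 divides L, Λ ≠ {L/3, 2L/3}. -/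

import Mathlib

open Finset

/-- The set of differences of a codeword `I ⊆ ℤ_L`. -/
def dset {L : ℕ} (I : Finset (ZMod L)) : Finset (ZMod L) :=
  (I ×ˢ I).image fun p => p.1 - p.2

/-- The set of nonzero differences. -/
def dstar {L : ℕ} (I : Finset (ZMod L)) : Finset (ZMod L) := dset I \ {0}

/-- A conflict-avoiding code of length `L` and weight `ω`. -/
def IsCAC (L ω : ℕ) (C : Finset (Finset (ZMod L))) : Prop :=
  (∀ I ∈ C, I.card = ω) ∧
  ∀ I ∈ C, ∀ J ∈ C, I ≠ J → Disjoint (dstar I) (dstar J)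

/-- An equi-difference codeword of weight three: `I = {0, g, 2g}` for some generator
`1 ≤ g ≤ L/2`. -/
def IsEquiDiff {L : ℕ} (I : Finset (ZMod L)) : Prop :=
  ∃ g : ℕ, 1 ≤ g ∧ 2 * g ≤ L ∧ I = {0, (g : ZMod L), ((2 * g : ℕ) : ZMod L)}

/-- The leave of a CAC `C` of length `L`: `Λ = ℤ_L \ ⋃_{I ∈ C} d(I)`. -/
def leave {L : ℕ} (C : Finset (Finset (ZMod L))) : Set (ZMod L) :=
  Set.univ \ ⋃ I ∈ C, (dset I : Set (ZMod L))

/-- `e_n`: the multiplicative order of `2` modulo `n`. -/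
noncomputable def eord (n : ℕ) : ℕ := orderOf (2 : ZMod n)

/-- `c_n`: the multiplicative suborder of `2` modulo `n`, i.e. the least `c ≥ 1` with
`2^c ≡ ±1 (mod n)`. -/
noncomputable def subord (n : ℕ) : ℕ :=
  sInf {c : ℕ | 1 ≤ c ∧ ((2 : ZMod n) ^ c = 1 ∨ (2 : ZMod n) ^ c = -1)}

/-- Condition (T3) on an odd prime `p`: `p ≡ 5 (mod 8)`, or `p ≡ 1 (mod 8)` and `4 ∣ e_p`. -/
def T3 (p : ℕ) : Prop := p % 8 = 5 ∨ (p % 8 = 1 ∧ 4 ∣ eord p)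

lemma aux_dset {L : ℕ} (g x : ZMod L) : x ∈ dset ({0, g, 2 * g} : Finset (ZMod L)) ↔
    x = 0 ∨ x = g ∨ x = -g ∨ x = 2 * g ∨ x = -(2 * g) := by
  simp only [dset, Finset.mem_image, Finset.mem_product, Finset.mem_insert, Finset.mem_singleton,
    Prod.exists]
  constructor
  · rintro ⟨a, b, ⟨ha, hb⟩, rfl⟩
    rcases ha with rfl | rfl | rfl <;> rcases hb with rfl | rfl | rfl <;> ring_nf <;> simp
  · rintro (rfl | rfl | rfl | rfl | rfl)
    · exact ⟨0, 0, by simp, by simp⟩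
    · exact ⟨x, 0, by simp, by simp⟩
    · exact ⟨0, g, by simp, by simp⟩
    · exact ⟨2 * g, 0, by simp, by simp⟩
    · exact ⟨0, 2 * g, by simp, by simp⟩

lemma aux_two {L : ℕ} (hodd : Odd L) : IsUnit (2 : ZMod L) := by
  have := (ZMod.isUnit_iff_coprime 2 L).2 (Nat.coprime_two_left.2 hodd)
  simpa using this

lemma aux_half {L : ℕ} (hodd : Odd L) (x y : ZMod L) (h : 2 * x = 2 * y) : x = y :=
  (aux_two hodd).mul_left_cancel h

lemma aux_ne_neg {L : ℕ} (hodd : Odd L) (x : ZMod L) (hx : x ≠ 0) : x ≠ -x := by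
  intro h
  apply hx
  apply aux_half hodd
  linear_combination h

lemma aux_rep {L : ℕ} (hodd : Odd L) (x : ZMod L) (hx : x ≠ 0) :
    ∃ g : ℕ, 1 ≤ g ∧ 2 * g ≤ L ∧ (x = g ∨ x = -(g : ZMod L)) := by
  have : NeZero L := ⟨by rintro rfl; simp at hodd⟩
  have h1 : x.val ≠ 0 := by simpa [ZMod.val_eq_zero] using hx
  have h2 := ZMod.val_lt x
  by_cases h : 2 * x.val ≤ L
  · exact ⟨x.val, by omega, h, Or.inl (by simp)⟩
  · refine ⟨L - x.val, by omega, by omega, Or.inr ?_⟩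
    rw [Nat.cast_sub h2.le]; simp

lemma aux_rep_inj {L : ℕ} (hodd : Odd L) (g h : ℕ) (hg : 1 ≤ g) (hg' : 2 * g ≤ L) (hh : 1 ≤ h)
    (hh' : 2 * h ≤ L) (e : (g : ZMod L) = h ∨ (g : ZMod L) = -(h : ZMod L)) : g = h := by
  obtain ⟨m, hm⟩ := hodd
  rcases e with e | e
  · rw [ZMod.natCast_eq_natCast_iff'] at e
    rwa [Nat.mod_eq_of_lt (by omega), Nat.mod_eq_of_lt (by omega)] at e
  · have : ((g + h : ℕ) : ZMod L) = 0 := by push_cast; rw [e]; ring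
    rw [ZMod.natCast_eq_zero_iff] at this
    have := Nat.le_of_dvd (by omega) this
    omega

/-- From a symmetric set of generators to a code. -/
lemma aux_code {L : ℕ} (hodd : Odd L) (hL : 1 < L) (a : ZMod L) (ha : a ≠ 0) (h3a : 3 * a ≠ 0)
    (G : ZMod L → Prop)
    (P1 : ∀ x, G x → G (-x)) (P2 : ∀ x, G x → x ≠ 0)
    (P3 : ∀ x, G x → G (2 * x) → 3 * x = 0)
    (P4 : ¬ G a) (P4' : ∀ x, G x → 2 * x ≠ a)
    (P5 : ∀ x, x ≠ 0 → x ≠ a → x ≠ -a → G x ∨ ∃ y, G y ∧ x = 2 * y) :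
    ∃ C : Finset (Finset (ZMod L)), IsCAC L 3 C ∧ (∀ I ∈ C, IsEquiDiff I) ∧
      (leave C).ncard = 2 ∧
      (3 ∣ L → leave C ≠ {((L / 3 : ℕ) : ZMod L), ((2 * L / 3 : ℕ) : ZMod L)}) := by
  classical
  set C : Finset (Finset (ZMod L)) :=
    ((Finset.range (L + 1)).filter (fun g : ℕ => 1 ≤ g ∧ 2 * g ≤ L ∧ G (g : ZMod L))).image
      (fun g : ℕ => ({0, (g : ZMod L), 2 * (g : ZMod L)} : Finset (ZMod L))) with hC
  have hmem : ∀ I, I ∈ C ↔ ∃ g : ℕ, 1 ≤ g ∧ 2 * g ≤ L ∧ G (g : ZMod L) ∧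
      I = {0, (g : ZMod L), 2 * (g : ZMod L)} := by
    intro I
    simp only [hC, Finset.mem_image, Finset.mem_filter, Finset.mem_range]
    constructor
    · rintro ⟨g, ⟨_, h1, h2, h3⟩, rfl⟩
      exact ⟨g, h1, h2, h3, rfl⟩
    · rintro ⟨g, h1, h2, h3, rfl⟩
      exact ⟨g, ⟨by omega, h1, h2, h3⟩, rfl⟩
  have cov : ∀ x, G x → ∃ I ∈ C, x ∈ dset I ∧ 2 * x ∈ dset I := by
    intro x hx
    obtain ⟨g, h1, h2, h3⟩ := aux_rep hodd x (P2 x hx)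
    refine ⟨{0, (g : ZMod L), 2 * (g : ZMod L)}, (hmem _).2 ⟨g, h1, h2, ?_, rfl⟩, ?_⟩
    · rcases h3 with h3 | h3
      · rwa [← h3]
      · have := P1 x hx
        rw [h3, neg_neg] at this
        exact this
    · rw [aux_dset, aux_dset]
      rcases h3 with rfl | rfl <;> simp
  have hna : ¬ G (-a) := fun h => P4 (by simpa using P1 _ h)
  have hleave : leave C = {a, -a} := by
    ext x
    simp only [leave, Set.mem_sdiff, Set.mem_univ, true_and, Set.mem_iUnion, not_exists,
      Set.mem_insert_iff, Set.mem_singleton_iff, Finset.mem_coe]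
    constructor
    · intro h
      have hG : ∀ y, G y → x ≠ 0 ∧ x ≠ y ∧ x ≠ 2 * y := by
        intro y hy
        obtain ⟨I, hI, h1, h2⟩ := cov y hy
        refine ⟨?_, ?_, ?_⟩
        · rintro rfl
          obtain ⟨g, _, _, _, rfl⟩ := (hmem I).1 hI
          exact h _ hI (by rw [aux_dset]; simp)
        · rintro rfl; exact h _ hI h1
        · rintro rfl; exact h _ hI h2
      by_contra hcon
      push Not at hcon
      have key : ∀ z, z ≠ 0 → z ≠ a → z ≠ -a → ∃ y, G y := by
        intro z h1 h2 h3
        rcases P5 z h1 h2 h3 with h | ⟨y, h, _⟩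
        · exact ⟨_, h⟩
        · exact ⟨_, h⟩
      have hx0 : x ≠ 0 := by
        obtain ⟨y, hy⟩ := key (2 * a) (by
          intro h; exact ha (aux_half hodd _ _ (by rw [h]; ring)))
          (by intro h; exact ha (by linear_combination h))
          (by intro h; exact h3a (by linear_combination h))
        exact (hG y hy).1
      rcases P5 x hx0 hcon.1 hcon.2 with h' | ⟨y, hy, h'⟩
      · exact (hG _ h').2.1 rfl
      · exact (hG _ hy).2.2 h'
    · intro hx I hI hd
      obtain ⟨g, _, _, hg, rfl⟩ := (hmem I).1 hI
      rw [aux_dset] at hd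
      have e2 : 2 * (g : ZMod L) ≠ -a := by
        intro h
        exact P4' _ (P1 _ hg) (by linear_combination -h)
      have e1 := P4' _ hg
      have e3 : (g : ZMod L) ≠ a := by rintro h; exact P4 (h ▸ hg)
      have e4 : (g : ZMod L) ≠ -a := by rintro h; exact hna (h ▸ hg)
      rcases hx with rfl | rfl <;> rcases hd with h | h | h | h | h
      · exact ha h
      · exact e3 h.symm
      · exact e4 (by rw [h]; simp)
      · exact e1 h.symm
      · exact e2 (by rw [h]; simp)
      · exact ha (by simpa using h)
      · exact e4 h.symm
      · exact e3 (by simpa using h.symm)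
      · exact e2 h.symm
      · exact e1 (by simpa using h.symm)
  refine ⟨C, ⟨?_, ?_⟩, ?_, ?_, ?_⟩
  · intro I hI
    obtain ⟨g, _, _, hg, rfl⟩ := (hmem I).1 hI
    have h0 := P2 _ hg
    rw [Finset.card_eq_three]
    refine ⟨_, _, _, h0.symm, ?_, ?_, rfl⟩
    · intro h; exact h0 (aux_half hodd _ _ (by rw [← h]; ring))
    · intro h; exact h0 (by linear_combination -h)
  · intro I hI J hJ hne
    obtain ⟨g, g1, g2, hg, rfl⟩ := (hmem I).1 hI
    obtain ⟨h, h1, h2, hh, rfl⟩ := (hmem J).1 hJ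
    rw [Finset.disjoint_left]
    intro x hx hx'
    simp only [dstar, Finset.mem_sdiff, aux_dset, Finset.mem_singleton] at hx hx'
    have hgh : g ≠ h := by rintro rfl; exact hne rfl
    have n1 : ¬ ((g : ZMod L) = h ∨ (g : ZMod L) = -(h : ZMod L)) :=
      fun e => hgh (aux_rep_inj hodd g h g1 g2 h1 h2 e)
    push Not at n1
    obtain ⟨n1, n2⟩ := n1
    have n3 : ∀ u v : ZMod L, G u → G v → u ≠ v → u ≠ -v → u ≠ 2 * v ∧ u ≠ -(2 * v) := by
      intro u v hu hv e1 e2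
      constructor
      · intro e
        have := P3 v hv (e ▸ hu)
        exact e2 (by linear_combination e + this)
      · intro e
        have h' := P1 _ hu
        rw [e, neg_neg] at h'
        have := P3 v hv h'
        exact e1 (by linear_combination e - this)
    obtain ⟨n4, n5⟩ := n3 _ _ hg hh n1 n2
    obtain ⟨n6, n7⟩ := n3 _ _ hh hg (Ne.symm n1) (fun e => n2 (by rw [e]; simp))
    have n8 : 2 * (g : ZMod L) ≠ 2 * h := fun e => n1 (aux_half hodd _ _ e)
    have n9 : 2 * (g : ZMod L) ≠ -(2 * h) := fun e => n2 (aux_half hodd _ _ (by rw [e]; ring))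
    obtain ⟨hx, hx0⟩ := hx
    obtain ⟨hx', -⟩ := hx'
    rcases hx with e | e | e | e | e <;> rcases hx' with f | f | f | f | f <;>
      first
      | exact hx0 e
      | exact hx0 f
      | exact n1 (by linear_combination f - e)
      | exact n1 (by linear_combination e - f)
      | exact n2 (by linear_combination f - e)
      | exact n2 (by linear_combination e - f)
      | exact n4 (by linear_combination f - e)
      | exact n4 (by linear_combination e - f)
      | exact n5 (by linear_combination f - e)
      | exact n5 (by linear_combination e - f)
      | exact n6 (by linear_combination f - e)
      | exact n6 (by linear_combination e - f)
      | exact n7 (by linear_combination f - e)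
      | exact n7 (by linear_combination e - f)
      | exact n8 (by linear_combination f - e)
      | exact n8 (by linear_combination e - f)
      | exact n9 (by linear_combination f - e)
      | exact n9 (by linear_combination e - f)
  · intro I hI
    obtain ⟨g, g1, g2, hg, rfl⟩ := (hmem I).1 hI
    exact ⟨g, g1, g2, by push_cast; rfl⟩
  · rw [hleave]
    exact Set.ncard_pair (aux_ne_neg hodd a ha)
  · intro h3 h
    rw [hleave] at h
    have : a ∈ ({a, -a} : Set (ZMod L)) := by simp
    rw [h] at this
    obtain ⟨K, rfl⟩ := h3
    have e1 : 3 * K / 3 = K := by omega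
    have e2 : 2 * (3 * K) / 3 = 2 * K := by omega
    rw [e1, e2] at this
    have e3 : (3 : ZMod (3 * K)) * (K : ZMod (3 * K)) = 0 := by
      have := ZMod.natCast_self (3 * K)
      push_cast at this ⊢
      exact this
    rcases this with h | h
    · exact h3a (by rw [h, e3])
    · rw [Set.mem_singleton_iff] at h
      exact h3a (by rw [h]; push_cast; linear_combination 2 * e3)

/-- Equality up to sign. -/
def pmeq {R : Type*} [Ring R] (u v : R) : Prop := u = v ∨ u = -v

lemma pmeq.refl' {R : Type*} [Ring R] (u : R) : pmeq u u := Or.inl rfl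
lemma pmeq.symm' {R : Type*} [Ring R] {u v : R} (h : pmeq u v) : pmeq v u := by
  rcases h with rfl | rfl
  · exact Or.inl rfl
  · exact Or.inr (by simp)
lemma pmeq.trans' {R : Type*} [Ring R] {u v w : R} (h : pmeq u v) (h' : pmeq v w) : pmeq u w := by
  rcases h with rfl | rfl
  · exact h'
  · rcases h' with rfl | rfl
    · exact Or.inr rfl
    · exact Or.inl (by simp)
lemma pmeq.mul' {R : Type*} [Ring R] {u v : R} (c : R) (h : pmeq u v) : pmeq (c * u) (c * v) := by
  rcases h with rfl | rfl
  · exact Or.inl rfl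
  · exact Or.inr (by simp)
lemma pmeq.neg' {R : Type*} [Ring R] {u v : R} (h : pmeq u v) : pmeq (-u) v := by
  rcases h with rfl | rfl
  · exact Or.inr rfl
  · exact Or.inl (by simp)
lemma pmeq.half' {L : ℕ} (hodd : Odd L) {u v : ZMod L} (h : pmeq (2 * u) (2 * v)) : pmeq u v := by
  rcases h with h | h
  · exact Or.inl (aux_half hodd _ _ h)
  · exact Or.inr (aux_half hodd _ _ (by rw [h]; ring))
lemma pmeq.halfpow {L : ℕ} (hodd : Odd L) (k : ℕ) {u v : ZMod L}
    (h : pmeq (2 ^ k * u) (2 ^ k * v)) : pmeq u v := by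
  induction k with
  | zero => simpa using h
  | succ k ih => exact ih (pmeq.half' hodd (by rw [← mul_assoc, ← mul_assoc, ← pow_succ']; exact h))

lemma aux_repfn {L : ℕ} (hodd : Odd L) : ∃ r : ZMod L → ZMod L, (∀ x, r (2 * x) = r x) ∧
    (∀ x, r (-x) = r x) ∧ ∀ x, ∃ k : ℕ, pmeq x (2 ^ k * r x) := by
  have h2 : (2 : ZMod L) ^ (Nat.totient L) = 1 := by
    obtain ⟨u, hu⟩ := aux_two hodd
    have := ZMod.pow_totient u
    rw [← hu, ← Units.val_pow_eq_pow_val, this]; simp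
  have hpos : 0 < Nat.totient L := Nat.totient_pos.2 hodd.pos
  let s : Setoid (ZMod L) :=
    { r := fun x y => ∃ k : ℕ, pmeq x (2 ^ k * y)
      iseqv := by
        refine ⟨fun x => ⟨0, Or.inl (by simp)⟩, ?_, ?_⟩
        · rintro x y ⟨k, h⟩
          refine ⟨k * (Nat.totient L - 1), ?_⟩
          have h' := (h.mul' (2 ^ (k * (Nat.totient L - 1)))).symm'
          rw [← mul_assoc, ← pow_add] at h'
          have e : k * (Nat.totient L - 1) + k = Nat.totient L * k := by
            obtain ⟨t, ht⟩ := Nat.exists_eq_add_of_lt hpos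
            rw [ht]; simp; ring
          rw [e, pow_mul, h2, one_pow, one_mul] at h'
          exact h'
        · rintro x y z ⟨k, h⟩ ⟨l, h'⟩
          refine ⟨k + l, ?_⟩
          have := h.trans' (h'.mul' (2 ^ k))
          rwa [← mul_assoc, ← pow_add] at this }
  refine ⟨fun x => (Quotient.mk s x).out, ?_, ?_, ?_⟩
  · intro x
    have : Quotient.mk s (2 * x) = Quotient.mk s x :=
      Quotient.sound ⟨1, Or.inl (by simp)⟩
    simp only [this]
  · intro x
    have : Quotient.mk s (-x) = Quotient.mk s x :=
      Quotient.sound ⟨0, Or.inr (by simp)⟩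
    simp only [this]
  · intro x
    exact s.symm (Quotient.mk_out (s := s) x)

lemma aux_par {L : ℕ} (hodd : Odd L) (x r : ZMod L) (hE : ∀ k : ℕ, pmeq (2 ^ k * x) x → Even k)
    (i j : ℕ) (hi : pmeq x (2 ^ i * r)) (hj : pmeq x (2 ^ j * r)) (hij : i ≤ j) :
    Even i ↔ Even j := by
  obtain ⟨d, rfl⟩ := Nat.exists_eq_add_of_le hij
  have h1 := hi.mul' (2 ^ d)
  rw [← mul_assoc, ← pow_add, add_comm d i] at h1
  have := hE d (h1.trans' hj.symm')
  simp [Nat.even_add, this]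

lemma aux_main {L : ℕ} (hodd : Odd L) (hL : 1 < L) (a : ZMod L) (ha : a ≠ 0) (c : ℕ)
    (hc1 : 1 < c) (hcodd : Odd c)
    (hc : ∀ k : ℕ, pmeq (2 ^ k * a) a ↔ c ∣ k)
    (hx : ∀ x : ZMod L, x ≠ 0 → 3 * x ≠ 0 → (∃ k : ℕ, pmeq x (2 ^ k * a)) ∨
      ∀ k : ℕ, pmeq (2 ^ k * x) x → Even k) :
    ∃ C : Finset (Finset (ZMod L)), IsCAC L 3 C ∧ (∀ I ∈ C, IsEquiDiff I) ∧
      (leave C).ncard = 2 ∧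
      (3 ∣ L → leave C ≠ {((L / 3 : ℕ) : ZMod L), ((2 * L / 3 : ℕ) : ZMod L)}) := by
  obtain ⟨r, r2, rn, rk⟩ := aux_repfn hodd
  have h3a : 3 * a ≠ 0 := by
    intro h
    have : c ∣ 1 := (hc 1).1 (Or.inr (by linear_combination h))
    have := Nat.le_of_dvd one_pos this
    omega
  have hhalf0 : ∀ x : ZMod L, 2 * x = 0 → x = 0 := fun x h => aux_half hodd _ _ (by rw [h]; ring)
  have h3h : ∀ x : ZMod L, 3 * (2 * x) = 0 → 3 * x = 0 := fun x h =>
    hhalf0 _ (by rw [← h]; ring)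
  have hac : pmeq (2 ^ c * a) a := (hc c).2 dvd_rfl
  let O : ZMod L → Prop := fun x => ∃ k : ℕ, pmeq x (2 ^ k * a)
  have O2 : ∀ x, O (2 * x) → O x := by
    rintro x ⟨k, hk⟩
    refine ⟨k + (c - 1), pmeq.half' hodd ?_⟩
    have h1 := hac.symm'.mul' (2 ^ k)
    have h2 := hk.trans' h1
    have e : (2 : ZMod L) * (2 ^ (k + (c - 1)) * a) = 2 ^ k * (2 ^ c * a) := by
      obtain ⟨d, rfl⟩ : ∃ d, c = d + 1 := ⟨c - 1, by omega⟩
      simp only [Nat.add_sub_cancel]; ring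
    rwa [e]
  have O2' : ∀ x, O x → O (2 * x) := by
    rintro x ⟨k, hk⟩
    refine ⟨k + 1, ?_⟩
    have := hk.mul' 2
    rwa [← mul_assoc, ← pow_succ'] at this
  have On : ∀ x, O x → O (-x) := by
    rintro x ⟨k, hk⟩
    exact ⟨k, hk.neg'⟩
  have Oa : O a := ⟨0, Or.inl (by simp)⟩
  let F : ZMod L → Prop := fun x => ∃ k : ℕ, Even k ∧ pmeq x (2 ^ k * r x)
  have hF : ∀ x, x ≠ 0 → 3 * x ≠ 0 → ¬ O x → ∀ k : ℕ, pmeq x (2 ^ k * r x) → (F x ↔ Even k) := by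
    intro x h0 h3 hO k hk
    have hE := (hx x h0 h3).resolve_left hO
    constructor
    · rintro ⟨l, hl, hl'⟩
      rcases le_total k l with h | h
      · exact (aux_par hodd x _ hE k l hk hl' h).2 hl
      · exact (aux_par hodd x _ hE l k hl' hk h).1 hl
    · intro h; exact ⟨k, h, hk⟩
  have hF2 : ∀ x, x ≠ 0 → 3 * x ≠ 0 → ¬ O x → (F (2 * x) ↔ ¬ F x) := by
    intro x h0 h3 hO
    obtain ⟨k, hk⟩ := rk x
    rw [hF x h0 h3 hO k hk]
    have hk' := hk.mul' 2
    rw [← mul_assoc, ← pow_succ', ← r2] at hk'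
    rw [hF (2 * x) (fun h => h0 (hhalf0 _ h)) (fun h => h3 (h3h _ h)) (fun h => hO (O2 _ h)) _ hk']
    exact Nat.even_add_one
  have huniq : ∀ i j : ℕ, i ≤ j → j < c → pmeq (2 ^ i * a) (2 ^ j * a) → i = j := by
    intro i j hij hj h
    obtain ⟨d, rfl⟩ := Nat.exists_eq_add_of_le hij
    rw [pow_add, mul_assoc] at h
    have h' := (hc d).1 (pmeq.halfpow hodd i h).symm'
    have := Nat.eq_zero_of_dvd_of_lt h' (by omega)
    omega
  let G : ZMod L → Prop := fun x => (x ≠ 0 ∧ 3 * x = 0) ∨ (x ≠ 0 ∧ 3 * x ≠ 0 ∧ ¬ O x ∧ F x) ∨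
    ∃ k : ℕ, Odd k ∧ k < c ∧ pmeq x (2 ^ k * a)
  have hGO : ∀ x, O x → 3 * x ≠ 0 → G x → ∃ k : ℕ, Odd k ∧ k < c ∧ pmeq x (2 ^ k * a) := by
    rintro x hO h3 (h | h | h)
    · exact absurd h.2 h3
    · exact absurd hO h.2.2.1
    · exact h
  have hGN : ∀ x, ¬ O x → 3 * x ≠ 0 → G x → F x := by
    rintro x hO h3 (h | h | h)
    · exact absurd h.2 h3
    · exact h.2.2.2
    · obtain ⟨k, _, _, hk⟩ := h
      exact absurd ⟨k, hk⟩ hO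
  have P2 : ∀ x, G x → x ≠ 0 := by
    rintro x (h | h | ⟨k, _, _, hk⟩)
    · exact h.1
    · exact h.1
    · rintro rfl
      apply ha
      have : (pmeq 0 a) := pmeq.halfpow hodd k (by simpa using hk)
      rcases this with h | h
      · exact h.symm
      · simpa using h.symm
  refine aux_code hodd hL a ha h3a G ?_ P2 ?_ ?_ ?_ ?_
  · rintro x (h | h | ⟨k, h1, h2, hk⟩)
    · exact Or.inl ⟨by simpa using h.1, by rw [mul_neg, h.2, neg_zero]⟩
    · refine Or.inr (Or.inl ⟨by simpa using h.1, ?_, ?_, ?_⟩)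
      · rw [mul_neg]; simpa using h.2.1
      · intro h'; exact h.2.2.1 (by simpa using On _ h')
      · obtain ⟨k, hk, hk'⟩ := h.2.2.2
        exact ⟨k, hk, by rw [rn]; exact hk'.neg'⟩
    · exact Or.inr (Or.inr ⟨k, h1, h2, hk.neg'⟩)
  · intro x hg hg'
    by_contra h3
    have h3' : 3 * (2 * x) ≠ 0 := fun h => h3 (h3h _ h)
    by_cases hO : O x
    · obtain ⟨k, k1, k2, hk⟩ := hGO x hO h3 hg
      obtain ⟨l, l1, l2, hl⟩ := hGO _ (O2' _ hO) h3' hg'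
      have hk' := hk.mul' 2
      rw [← mul_assoc, ← pow_succ'] at hk'
      have hp := hk'.symm'.trans' hl
      have hkc : k + 1 < c := by
        obtain ⟨u, rfl⟩ := k1
        obtain ⟨v, rfl⟩ := hcodd
        omega
      have : k + 1 = l := by
        rcases le_total (k + 1) l with h | h
        · exact huniq _ _ h l2 hp
        · exact (huniq _ _ h hkc hp.symm').symm
      obtain ⟨u, rfl⟩ := k1
      obtain ⟨v, rfl⟩ := l1
      omega
    · have f1 := hGN x hO h3 hg
      have f2 := hGN _ (fun h => hO (O2 _ h)) h3' hg'
      exact (hF2 x (P2 x hg) h3 hO).1 f2 f1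
  · intro hg
    obtain ⟨k, k1, k2, hk⟩ := hGO a Oa h3a hg
    have := huniq 0 k (by omega) k2 (by simpa using hk)
    subst this
    simp at k1
  · rintro x hg rfl
    have h3x : 3 * x ≠ 0 := fun h => h3a (by linear_combination 2 * h)
    obtain ⟨k, k1, k2, hk⟩ := hGO x (O2 _ Oa) h3x hg
    have h1 := hk.mul' 2
    rw [← mul_assoc 2 (2 ^ k), ← pow_succ'] at h1
    have h2 := (hc _).1 h1.symm'
    have h3 := Nat.le_of_dvd (by omega) h2
    obtain ⟨u, rfl⟩ := k1
    obtain ⟨v, rfl⟩ := hcodd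
    omega
  · intro x h0 n1 n2
    by_cases h3 : 3 * x = 0
    · exact Or.inl (Or.inl ⟨h0, h3⟩)
    by_cases hO : O x
    · obtain ⟨k, hk⟩ := hO
      have hlt := Nat.mod_lt k (show c > 0 by omega)
      have e : pmeq x (2 ^ (k % c) * a) := by
        have h1 := ((hc (c * (k / c))).2 (dvd_mul_right _ _)).mul' (2 ^ (k % c))
        rw [← mul_assoc, ← pow_add, Nat.mod_add_div] at h1
        exact hk.trans' h1
      generalize k % c = l at e hlt
      rcases Nat.even_or_odd l with hl | hl
      · rcases Nat.eq_zero_or_pos l with rfl | hl0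
        · rcases e with e | e
          · exact absurd (by simpa using e) n1
          · exact absurd (by simpa using e) n2
        · obtain ⟨j, rfl⟩ : ∃ j, l = j + 1 := ⟨l - 1, by omega⟩
          have hj : Odd j := by
            rw [Nat.even_add_one] at hl; simpa using hl
          right
          rcases e with e | e
          · exact ⟨2 ^ j * a, Or.inr (Or.inr ⟨j, hj, by omega, Or.inl rfl⟩), by rw [e]; ring⟩
          · exact ⟨-(2 ^ j * a), Or.inr (Or.inr ⟨j, hj, by omega, Or.inr rfl⟩), by rw [e]; ring⟩
      · exact Or.inl (Or.inr (Or.inr ⟨l, hl, hlt, e⟩))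
    · obtain ⟨y, rfl⟩ : ∃ y, x = 2 * y := by
        obtain ⟨u, hu⟩ := aux_two hodd
        exact ⟨↑u⁻¹ * x, by rw [← hu]; simp⟩
      have y0 : y ≠ 0 := by rintro rfl; simp at h0
      have y3 : 3 * y ≠ 0 := fun h => h3 (by linear_combination 2 * h)
      have yO : ¬ O y := fun h => hO (O2' _ h)
      by_cases hf : F y
      · exact Or.inr ⟨y, Or.inr (Or.inl ⟨y0, y3, yO, hf⟩), rfl⟩
      · exact Or.inl (Or.inr (Or.inl ⟨h0, h3, hO, (hF2 y y0 y3 yO).2 hf⟩))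

lemma aux_zero {P K : ℕ} (hK : 0 < K) (z : ℤ) :
    (z : ZMod (P * K)) * (K : ZMod (P * K)) = 0 ↔ (z : ZMod P) = 0 := by
  have : (z : ZMod (P * K)) * (K : ZMod (P * K)) = ((z * (K : ℤ) : ℤ) : ZMod (P * K)) := by
    push_cast; rfl
  rw [this, ZMod.intCast_zmod_eq_zero_iff_dvd, ZMod.intCast_zmod_eq_zero_iff_dvd]
  push_cast
  exact mul_dvd_mul_iff_right (by exact_mod_cast hK.ne')

lemma aux_pm {P K : ℕ} (hK : 0 < K) (z w : ℤ) :
    pmeq ((z : ZMod (P * K)) * (K : ZMod (P * K))) ((w : ZMod (P * K)) * (K : ZMod (P * K))) ↔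
      pmeq (z : ZMod P) (w : ZMod P) := by
  have h1 := aux_zero (P := P) hK (z - w)
  have h2 := aux_zero (P := P) hK (z + w)
  push_cast at h1 h2
  unfold pmeq
  rw [← sub_eq_zero, ← sub_mul, h1, sub_eq_zero, eq_neg_iff_add_eq_zero, ← add_mul, h2,
    eq_neg_iff_add_eq_zero]

lemma aux_PK (P K : ℕ) (hodd : Odd (P * K)) (hP : 1 < P) (c : ℕ) (hc1 : 1 < c) (hcodd : Odd c)
    (hc : ∀ k : ℕ, pmeq ((2 : ZMod P) ^ k) 1 ↔ c ∣ k)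
    (hJ : ∀ j : ZMod P, j ≠ 0 → 3 * j ≠ 0 → ∃ k : ℕ, pmeq j (2 ^ k))
    (hE : ∀ x : ZMod (P * K), (P : ZMod (P * K)) * x ≠ 0 → 3 * x ≠ 0 →
      ∀ k : ℕ, pmeq (2 ^ k * x) x → Even k) (L : ℕ) (hLe : L = P * K) :
    ∃ C : Finset (Finset (ZMod L)), IsCAC L 3 C ∧ (∀ I ∈ C, IsEquiDiff I) ∧
      (leave C).ncard = 2 ∧
      (3 ∣ L → leave C ≠ {((L / 3 : ℕ) : ZMod L), ((2 * L / 3 : ℕ) : ZMod L)}) := by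
  subst hLe
  have hK : 0 < K := by
    rcases Nat.eq_zero_or_pos K with rfl | h
    · simp at hodd
    · exact h
  have : NeZero (P * K) := ⟨by positivity⟩
  refine aux_main hodd (by nlinarith) (K : ZMod (P * K)) ?_ c hc1 hcodd ?_ ?_
  · intro h
    have h1 := (aux_zero (P := P) hK 1).1 (by simpa using h)
    have : Fact (1 < P) := ⟨hP⟩
    simp at h1
  · intro k
    rw [← hc]
    have := aux_pm (P := P) hK (2 ^ k) 1
    push_cast at this
    rwa [one_mul] at this
  · intro x h0 h3
    by_cases hPx : (P : ZMod (P * K)) * x = 0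
    · left
      obtain ⟨n, rfl⟩ : ∃ n : ℕ, x = n := ⟨x.val, by simp⟩
      rw [← Nat.cast_mul, ZMod.natCast_eq_zero_iff] at hPx
      obtain ⟨j, rfl⟩ := Nat.dvd_of_mul_dvd_mul_left (by omega) hPx
      have e0 := aux_zero (P := P) hK (j : ℤ)
      have e3 := aux_zero (P := P) hK (3 * j : ℤ)
      push_cast at e0 e3 h0 h3
      have := hJ (j : ZMod P) (fun h => h0 (by rw [← e0.2 h]; ring))
        (fun h => h3 (by rw [← e3.2 h]; ring))
      obtain ⟨k, hk⟩ := this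
      refine ⟨k, ?_⟩
      have := aux_pm (P := P) hK (j : ℤ) (2 ^ k)
      push_cast at this ⊢
      rw [mul_comm (K : ZMod (P * K))]
      exact this.2 hk
    · exact Or.inr (hE x hPx h3)

lemma aux_T3 (q : ℕ) (hq : q.Prime) (h : T3 q) : 4 ∣ orderOf (2 : ZMod q) := by
  rcases h with h | h
  · have : Fact q.Prime := ⟨hq⟩
    have hq2 : q ≠ 2 := by rintro rfl; simp at h
    have h20 : (2 : ZMod q) ≠ 0 := by
      intro h0
      have : ((2 : ℕ) : ZMod q) = 0 := by exact_mod_cast h0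
      rw [ZMod.natCast_eq_zero_iff] at this
      exact hq2 ((Nat.prime_dvd_prime_iff_eq hq Nat.prime_two).1 this)
    have h1 : ¬ IsSquare (2 : ZMod q) := by
      rw [ZMod.exists_sq_eq_two_iff hq2]; omega
    rw [ZMod.euler_criterion q h20, ← orderOf_dvd_iff_pow_eq_one] at h1
    have h2 : orderOf (2 : ZMod q) ∣ q - 1 :=
      orderOf_dvd_iff_pow_eq_one.2 (ZMod.pow_card_sub_one_eq_one h20)
    generalize orderOf (2 : ZMod q) = e at h1 h2
    obtain ⟨s, hs⟩ : ∃ s, q = 8 * s + 5 := ⟨q / 8, by omega⟩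
    have e1 : q - 1 = 4 * (2 * s + 1) := by omega
    have e2 : q / 2 = 2 * (2 * s + 1) := by omega
    rw [e1] at h2
    rw [e2] at h1
    by_contra h4
    apply h1
    obtain ⟨f, hf⟩ := h2
    rcases Nat.even_or_odd f with ⟨g, hg⟩ | hfo
    · exact ⟨g, by subst hg; linarith⟩
    · exfalso
      apply h4
      have : Nat.Coprime 4 f := by
        have := (Nat.coprime_two_left.2 hfo)
        exact Nat.Coprime.pow_left 2 this
      exact this.dvd_of_dvd_mul_right ⟨_, hf.symm⟩
  · exact h.2

lemma aux_prime (p : ℕ) (hp : p.Prime) (h3 : 3 < p) (hs : 2 * subord p = p - 1) (hT : ¬ T3 p) :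
    Odd (subord p) ∧ 1 < subord p ∧ (∀ k : ℕ, pmeq ((2 : ZMod p) ^ k) 1 ↔ subord p ∣ k) ∧
    ∀ j : ZMod p, j ≠ 0 → ∃ k : ℕ, pmeq j (2 ^ k) := by
  have : Fact p.Prime := ⟨hp⟩
  have hpm : ∀ u v : ZMod p, pmeq u v ↔ u ^ 2 = v ^ 2 := fun u v => sq_eq_sq_iff_eq_or_eq_neg.symm
  have h4 : ∀ k : ℕ, pmeq ((2 : ZMod p) ^ k) 1 ↔ (4 : ZMod p) ^ k = 1 := by
    intro k
    rw [hpm, ← pow_mul, mul_comm, pow_mul]; norm_num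
  have hc1 : 1 < subord p := by omega
  have hmem : subord p ∈ {c : ℕ | 1 ≤ c ∧ ((2 : ZMod p) ^ c = 1 ∨ (2 : ZMod p) ^ c = -1)} := by
    apply Nat.sInf_mem
    by_contra hne
    rw [Set.not_nonempty_iff_eq_empty] at hne
    unfold subord at hc1
    rw [hne] at hc1
    simp at hc1
  have hs4 : (4 : ZMod p) ^ subord p = 1 := (h4 _).1 hmem.2
  have hopos : 0 < orderOf (4 : ZMod p) :=
    Nat.pos_of_dvd_of_pos (orderOf_dvd_of_pow_eq_one hs4) (by omega)
  have ho : orderOf (4 : ZMod p) = subord p := by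
    apply le_antisymm
    · exact Nat.le_of_dvd (by omega) (orderOf_dvd_of_pow_eq_one hs4)
    · apply Nat.sInf_le
      exact ⟨hopos, (h4 _).2 (pow_orderOf_eq_one _)⟩
  refine ⟨?_, hc1, ?_, ?_⟩
  · by_contra hodd
    rw [Nat.not_odd_iff_even] at hodd
    obtain ⟨s, hs'⟩ := hodd
    apply hT
    by_cases h5 : p % 8 = 5
    · exact Or.inl h5
    · right
      refine ⟨by omega, ?_⟩
      have h1 : subord p ∣ eord p := by
        rw [← ho]
        apply orderOf_dvd_of_pow_eq_one
        rw [← h4]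
        exact Or.inl (pow_orderOf_eq_one _)
      exact dvd_trans (by omega) h1
  · intro k
    rw [h4, ← ho, orderOf_dvd_iff_pow_eq_one]
  · intro j hj
    have hprim : IsPrimitiveRoot (4 : ZMod p) (subord p) := ho ▸ IsPrimitiveRoot.orderOf _
    have : NeZero (subord p) := ⟨by omega⟩
    have hj2 : (j ^ 2) ^ (subord p) = 1 := by
      rw [← pow_mul, hs]; exact ZMod.pow_card_sub_one_eq_one hj
    obtain ⟨k, _, hk⟩ := hprim.eq_pow_of_pow_eq_one hj2
    refine ⟨k, ?_⟩
    rw [hpm, ← hk, ← pow_mul, mul_comm k, pow_mul]; norm_num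

lemma aux_ord {L : ℕ} (x : ZMod L) (q : ℕ) (hq : q ∣ addOrderOf x) (z : ℤ)
    (h : (z : ZMod L) * x = 0) : (z : ZMod q) = 0 := by
  rw [ZMod.intCast_zmod_eq_zero_iff_dvd]
  have : (addOrderOf x : ℤ) ∣ z := by
    rw [addOrderOf_dvd_iff_zsmul_eq_zero, zsmul_eq_mul]; exact h
  exact dvd_trans (by exact_mod_cast hq) this

lemma aux_ordpm {L : ℕ} (x : ZMod L) (q : ℕ) (hq : q ∣ addOrderOf x) (k : ℕ)
    (h : 2 ^ k * x = x) : (2 : ZMod q) ^ k = 1 := by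
  have := aux_ord x q hq (2 ^ k - 1) (by push_cast; rw [sub_mul, h]; simp)
  push_cast at this
  exact sub_eq_zero.1 this

lemma aux_ordpm' {L : ℕ} (x : ZMod L) (q : ℕ) (hq : q ∣ addOrderOf x) (k : ℕ)
    (h : 2 ^ k * x = -x) : (2 : ZMod q) ^ k = -1 := by
  have := aux_ord x q hq (2 ^ k + 1) (by push_cast; rw [add_mul, h]; simp)
  push_cast at this
  exact eq_neg_of_add_eq_zero_left this

/-- Either `x` has all parities even or its order divides `M`. -/
lemma aux_E {L M N : ℕ} (hLe : L = M * N) (hN : ∀ q : ℕ, q.Prime → q ∣ N → T3 q) (x : ZMod L) :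
    (∀ k : ℕ, pmeq (2 ^ k * x) x → Even k) ∨ addOrderOf x ∣ M := by
  by_cases hco : Nat.Coprime (addOrderOf x) N
  · right
    have h1 : addOrderOf x ∣ M * N := by
      rw [addOrderOf_dvd_iff_nsmul_eq_zero, nsmul_eq_mul, ← hLe]; simp
    exact hco.dvd_of_dvd_mul_right h1
  · left
    obtain ⟨q, hq, h1, h2⟩ := Nat.Prime.not_coprime_iff_dvd.1 hco
    have h4 := aux_T3 q hq (hN q hq h2)
    intro k hk
    have : (2 : ZMod q) ^ (2 * k) = 1 := by
      rcases hk with hk | hk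
      · rw [mul_comm, pow_mul, aux_ordpm x q h1 k hk, one_pow]
      · rw [mul_comm, pow_mul, aux_ordpm' x q h1 k hk]; ring
    have := dvd_trans h4 (orderOf_dvd_of_pow_eq_one this)
    rw [even_iff_two_dvd]; omega

lemma aux_dvdmul {L M : ℕ} (x : ZMod L) (h : addOrderOf x ∣ M) : (M : ZMod L) * x = 0 := by
  rw [addOrderOf_dvd_iff_nsmul_eq_zero, nsmul_eq_mul] at h; exact h

lemma aux_primes {m : ℕ} (p r : Fin m → ℕ) (hp : ∀ i, (p i).Prime) (s : Finset (Fin m))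
    (hT : ∀ i ∈ s, T3 (p i)) (q : ℕ) (hq : q.Prime) (h : q ∣ ∏ i ∈ s, p i ^ r i) : T3 q := by
  obtain ⟨i, hi, h⟩ := (Prime.dvd_finsetProd_iff hq.prime _).1 h
  have := (Nat.prime_dvd_prime_iff_eq hq (hp i)).1 (hq.dvd_of_dvd_pow h)
  rw [this]; exact hT i hi

theorem exists_equidiff_CAC_leave_two (L m : ℕ) (hm : 0 < m)
    (p r : Fin m → ℕ) (hodd : Odd L) (hL : 1 < L)
    (hp : ∀ i, (p i).Prime) (hmono : StrictMono p) (hr : ∀ i, 1 ≤ r i)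
    (hfac : L = ∏ i, p i ^ r i)
    (hcond :
      (3 < p ⟨0, hm⟩ ∧ ∃ t, r t = 1 ∧ 2 * subord (p t) = p t - 1 ∧ ¬ T3 (p t) ∧
        ∀ i, i ≠ t → T3 (p i)) ∨
      (p ⟨0, hm⟩ = 3 ∧ r ⟨0, hm⟩ = 1 ∧ ∃ t, t ≠ ⟨0, hm⟩ ∧ r t = 1 ∧
        subord (p t) = eord (p t) ∧ 2 * subord (p t) = p t - 1 ∧ ¬ T3 (p t) ∧
        ∀ i, i ≠ ⟨0, hm⟩ → i ≠ t → T3 (p i)) ∨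
      (p ⟨0, hm⟩ = 3 ∧ r ⟨0, hm⟩ = 2 ∧ ∀ i, i ≠ ⟨0, hm⟩ → T3 (p i))) :
    ∃ C : Finset (Finset (ZMod L)), IsCAC L 3 C ∧ (∀ I ∈ C, IsEquiDiff I) ∧
      (leave C).ncard = 2 ∧
      (3 ∣ L → leave C ≠ {((L / 3 : ℕ) : ZMod L), ((2 * L / 3 : ℕ) : ZMod L)}) := by
  rcases hcond with ⟨h0, t, hrt, hs, hT, hall⟩ | ⟨h0, hr0, t, ht, hrt, hse, hs, hT, hall⟩ |
    ⟨h0, hr0, hall⟩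
  · have ht3 : 3 < p t := lt_of_lt_of_le h0 (hmono.monotone (Fin.mk_le_of_le_val (by simp)))
    obtain ⟨c1, c2, c3, c4⟩ := aux_prime (p t) (hp t) ht3 hs hT
    have hLe : L = p t * ∏ i ∈ Finset.univ.erase t, p i ^ r i := by
      rw [hfac, ← Finset.mul_prod_erase _ _ (Finset.mem_univ t), hrt, pow_one]
    have hN := aux_primes p r hp (Finset.univ.erase t)
      (fun i hi => hall i (Finset.ne_of_mem_erase hi))
    generalize ∏ i ∈ Finset.univ.erase t, p i ^ r i = N at hLe hN
    refine aux_PK (p t) N (hLe ▸ hodd) (by omega) _ c2 c1 c3 (fun j hj _ => c4 j hj) ?_ L hLe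
    intro x hx h3
    refine (aux_E rfl hN x).resolve_right ?_
    intro h
    exact hx (aux_dvdmul x h)
  · have ht3 : 3 < p t := by
      rw [← h0]
      exact hmono (lt_of_le_of_ne (Fin.mk_le_of_le_val (by simp)) (Ne.symm ht))
    obtain ⟨c1, c2, c3, c4⟩ := aux_prime (p t) (hp t) ht3 hs hT
    have hLe : L = p t * (3 * ∏ i ∈ (Finset.univ.erase t).erase ⟨0, hm⟩, p i ^ r i) := by
      rw [hfac, ← Finset.mul_prod_erase _ _ (Finset.mem_univ t), hrt, pow_one,
        ← Finset.mul_prod_erase (Finset.univ.erase t) _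
          (Finset.mem_erase.2 ⟨Ne.symm ht, Finset.mem_univ (⟨0, hm⟩ : Fin m)⟩), hr0, pow_one, h0]
    have hN := aux_primes p r hp ((Finset.univ.erase t).erase ⟨0, hm⟩)
      (fun i hi => hall i (Finset.ne_of_mem_erase hi)
        (Finset.ne_of_mem_erase (Finset.mem_of_mem_erase hi)))
    generalize ∏ i ∈ (Finset.univ.erase t).erase ⟨0, hm⟩, p i ^ r i = N at hLe hN
    refine aux_PK (p t) (3 * N) (hLe ▸ hodd) (by omega) _ c2 c1 c3 (fun j hj _ => c4 j hj) ?_ L hLe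
    intro x hx h3
    rcases aux_E (M := p t * 3) (mul_assoc _ _ _).symm hN x with h | h
    · exact h
    by_cases d3 : 3 ∣ addOrderOf x
    · by_cases dp : p t ∣ addOrderOf x
      · intro k hk
        rcases hk with hk | hk
        · have := aux_ordpm x 3 d3 k hk
          by_contra hk'
          rw [Nat.not_even_iff_odd] at hk'
          have e : (2 : ZMod 3) = -1 := by decide
          rw [e, hk'.neg_one_pow] at this
          exact absurd this (by decide)
        · exfalso
          have h1 := aux_ordpm' x (p t) dp k hk
          have h2 : (2 : ZMod (p t)) ^ subord (p t) = 1 := by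
            rw [hse]; exact pow_orderOf_eq_one _
          have h4 : ((2 : ZMod (p t)) ^ k) ^ subord (p t) = 1 := by
            rw [← pow_mul, mul_comm, pow_mul, h2, one_pow]
          rw [h1, c1.neg_one_pow] at h4
          have : Fact (2 < p t) := ⟨by omega⟩
          exact ZMod.neg_one_ne_one h4
      · exfalso
        have : Nat.Coprime (addOrderOf x) (p t) := ((hp t).coprime_iff_not_dvd.2 dp).symm
        exact h3 (by exact_mod_cast aux_dvdmul x (this.dvd_of_dvd_mul_left h))
    · exfalso
      have : Nat.Coprime (addOrderOf x) 3 := ((Nat.prime_three).coprime_iff_not_dvd.2 d3).symm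
      exact hx (aux_dvdmul x (this.dvd_of_dvd_mul_right h))
  · have hLe : L = 9 * ∏ i ∈ Finset.univ.erase ⟨0, hm⟩, p i ^ r i := by
      rw [hfac, ← Finset.mul_prod_erase _ _ (Finset.mem_univ (⟨0, hm⟩ : Fin m)), hr0, h0]
      norm_num
    have hN := aux_primes p r hp (Finset.univ.erase ⟨0, hm⟩)
      (fun i hi => hall i (Finset.ne_of_mem_erase hi))
    generalize ∏ i ∈ Finset.univ.erase ⟨0, hm⟩, p i ^ r i = N at hLe hN
    refine aux_PK 9 N (hLe ▸ hodd) (by omega) 3 (by omega) (by decide) ?_ ?_ ?_ L hLe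
    · intro k
      have e : (2 : ZMod 9) ^ k = (-1) ^ (k / 3) * 2 ^ (k % 3) := by
        conv_lhs => rw [← Nat.div_add_mod k 3, pow_add, pow_mul]
        congr 1
      have h3 : k % 3 < 3 := Nat.mod_lt _ (by omega)
      rw [Nat.dvd_iff_mod_eq_zero, e]
      unfold pmeq
      generalize k % 3 = l at h3
      rcases neg_one_pow_eq_or (ZMod 9) (k / 3) with h | h <;> rw [h] <;>
        interval_cases l <;> decide
    · intro j hj hj3
      have : ∀ j : ZMod 9, j ≠ 0 → 3 * j ≠ 0 → (j = 2 ^ 0 ∨ j = -2 ^ 0) ∨ (j = 2 ^ 1 ∨ j = -2 ^ 1) ∨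
        (j = 2 ^ 2 ∨ j = -2 ^ 2) := by decide
      rcases this j hj hj3 with h | h | h
      · exact ⟨0, h⟩
      · exact ⟨1, h⟩
      · exact ⟨2, h⟩
    · intro x hx h3
      refine (aux_E rfl hN x).resolve_right ?_
      intro h
      exact hx (aux_dvdmul x h)
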